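/- Let f : 𝖱^n → 𝖱 be continuous, let I ⊆ N = {1,…,n} be nonempty, and suppose f is I-bounded. Then for every c ∈ 𝖱 there exists d ∈ 𝖱 such that for every b ∈ [0,c]^{N∖I}, the restriction of f to E_I(b,d) is constant. -/

import Mathlib

noncomputable section
open Set

/-- The first uncountable ordinal `ω₁`. -/
def Omega1 : Ordinal := Ordinal.omega 1

/-- The closed long ray `𝖱`: `ω₁ × [0,1)` with the lexicographic order. -/
def LongRay : Type 1 := {o : Ordinal // o < Omega1} ×ₗ (Set.Ico (0:ℝ) 1)

instance : LinearOrder LongRay :=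
  inferInstanceAs (LinearOrder ({o : Ordinal // o < Omega1} ×ₗ (Set.Ico (0:ℝ) 1)))

/-- `𝖱` carries the order topology. -/
instance : TopologicalSpace LongRay := Preorder.topology LongRay
instance : OrderTopology LongRay := ⟨rfl⟩

lemma omega1_pos : (0 : Ordinal) < Omega1 := Ordinal.omega_pos 1

/-- The point `0 = (0,0)` of the long ray. -/
def rayZero : LongRay := toLex (⟨0, omega1_pos⟩, ⟨0, by simp⟩)

/-- Identification of the countable ordinal `o` with the point `(o,0)` of the long ray
(junk value for `o ≥ ω₁`). -/
def ordR (o : Ordinal) : LongRay :=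
  if h : o < Omega1 then toLex (⟨o, h⟩, ⟨0, by simp⟩) else rayZero

/-- The `I`-diagonal at height `c` (only the values of `c` off `I` are relevant). -/
def Delta (n : ℕ) (I : Finset (Fin n)) (c : Fin n → LongRay) : Set (Fin n → LongRay) :=
  {x | (∀ i ∈ I, ∀ i' ∈ I, x i = x i') ∧ ∀ j ∉ I, x j = c j}

/-- `f` is `I`-cofinal if `f` restricted to `Δ_I = Δ_I(0)` is unbounded. -/
def ICofinal (n : ℕ) (f : (Fin n → LongRay) → LongRay) (I : Finset (Fin n)) : Prop :=
  ¬ BddAbove (f '' Delta n I (fun _ => rayZero))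

/-- The cofinality class `𝔠(f) = {I : f is I-cofinal}`. -/
def cofClass (n : ℕ) (f : (Fin n → LongRay) → LongRay) : Set (Finset (Fin n)) :=
  {I | ICofinal n f I}

/-- `M_I(c) = {x : x_i ≥ c for all i ∈ I}`. -/
def MSet (n : ℕ) (I : Finset (Fin n)) (c : LongRay) : Set (Fin n → LongRay) :=
  {x | ∀ i ∈ I, c ≤ x i}

/-- `E_I(b,d) = {x ∈ M_I(d) : x_j = b_j for all j ∉ I}`. -/
def ESet (n : ℕ) (I : Finset (Fin n)) (b : Fin n → LongRay) (d : LongRay) :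
    Set (Fin n → LongRay) :=
  {x | (∀ i ∈ I, d ≤ x i) ∧ ∀ j ∉ I, x j = b j}

/-!
Every countable subset of the long ray is bounded, so an increasing sequence of heights converges.
If, arbitrarily far out, some section of `f` took both values `≤ p` and values `≥ q` with `p < q`,
interleaving such points would produce, by compactness of `[0,c]`, a diagonal point with
`q ≤ f ≤ p`. Ranging over countably many gaps `p < q` dense below `u` gives one height beyond which
every section taking a value `< u` is constant.

The parameters whose section is eventually constant therefore form an open set. By separability of
the parameter space it is reached at a single height, hence is also closed. It contains the
parameter `0` since `f` is `I`-bounded, so it is everything by connectedness of `[0,c]^{N∖I}`.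
-/

open Filter Function Topology TopologicalSpace

section CountablyDirected

variable {L : Type*}

lemma countableInterFilter_atTop_of_bddAbove [Preorder L] [IsDirectedOrder L] [Nonempty L]
    (h : ∀ s : Set L, s.Countable → BddAbove s) : CountableInterFilter (atTop : Filter L) where
  countable_sInter_mem S hS hmem := by
    choose! a ha using fun s hs => mem_atTop_sets.1 (hmem s hs)
    obtain ⟨d, hd⟩ := h (a '' S) (hS.image a)
    exact mem_of_superset (Ici_mem_atTop d) fun x hx s hs =>
      ha s hs x ((hd (mem_image_of_mem a hs)).trans hx)

lemma bddAbove_range_of_countableInterFilter_atTop [Preorder L] [IsDirectedOrder L] [Nonempty L]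
    [CountableInterFilter (atTop : Filter L)] {ι : Type*} [Countable ι] (u : ι → L) :
    BddAbove (range u) :=
  let ⟨d, hd⟩ := (eventually_countable_forall.2 fun i => eventually_ge_atTop (u i)).exists
  ⟨d, forall_mem_range.2 hd⟩

lemma exists_eq_iUnion_of_monotone_isClosed [Preorder L] [IsDirectedOrder L] [Nonempty L]
    [CountableInterFilter (atTop : Filter L)] {K : Type*} [TopologicalSpace K] [SeparableSpace K]
    {C : L → Set K} (hmono : Monotone C) (hclosed : ∀ d, IsClosed (C d))
    (hopen : IsOpen (⋃ d, C d)) : ∃ d, C d = ⋃ d, C d := by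
  obtain ⟨T, hTc, hTd⟩ := exists_countable_dense K
  have hmem : ∀ᶠ d in atTop, ∀ t ∈ T, t ∈ ⋃ d, C d → t ∈ C d := by
    refine (eventually_countable_ball hTc).2 fun t _ => ?_
    by_cases ht : t ∈ ⋃ d, C d
    · obtain ⟨d₀, hd₀⟩ := mem_iUnion.1 ht
      filter_upwards [eventually_ge_atTop d₀] with d hd _ using hmono hd hd₀
    · exact Eventually.of_forall fun d h => absurd h ht
  obtain ⟨d, hd⟩ := hmem.exists
  refine ⟨d, (subset_iUnion C d).antisymm ?_⟩
  calc ⋃ d, C d ⊆ closure ((⋃ d, C d) ∩ T) := hTd.open_subset_closure_inter hopen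
    _ ⊆ C d := closure_minimal (fun t ht => hd t ht.2 ht.1) (hclosed d)

lemma exists_const_mem_of_isClosed [ConditionallyCompleteLinearOrder L] [Nonempty L]
    [TopologicalSpace L] [OrderTopology L] [CountableInterFilter (atTop : Filter L)]
    {ι : Type*} [Countable ι] {C : Set (ι → L)} (hC : IsClosed C)
    (hcof : ∀ d, ∃ x ∈ C, const ι d ≤ x) : ∃ z, const ι z ∈ C := by
  -- Interleaving `D 0 ≤ x₀ ≤ D 1 ≤ x₁ ≤ ⋯` forces all coordinates of `xₖ` to the same supremum.
  choose x hxC hdx using hcof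
  have hnext : ∀ d, ∃ d', d ≤ d' ∧ x d ≤ const ι d' := fun d =>
    ((eventually_ge_atTop d).and
      (eventually_countable_forall.2 fun i => eventually_ge_atTop (x d i))).exists
  choose next hle hxnext using hnext
  let D : ℕ → L := fun k => next^[k] (Classical.arbitrary L)
  have hD : ∀ k, D (k + 1) = next (D k) := fun k => iterate_succ_apply' next k _
  have hmono : Monotone D := monotone_nat_of_le_succ fun k => hD k ▸ hle (D k)
  have hlim : Tendsto D atTop (𝓝 (⨆ k, D k)) :=
    tendsto_atTop_ciSup hmono (bddAbove_range_of_countableInterFilter_atTop D)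
  have hxlim : Tendsto (fun k => x (D k)) atTop (𝓝 (const ι (⨆ k, D k))) :=
    tendsto_pi_nhds.2 fun i =>
      tendsto_of_tendsto_of_tendsto_of_le_of_le hlim (hlim.comp (tendsto_add_atTop_nat 1))
        (fun k => hdx (D k) i) fun k => (hxnext (D k) i).trans_eq (hD k).symm
  exact ⟨_, hC.mem_of_tendsto hxlim (Eventually.of_forall fun k => hxC (D k))⟩

end CountablyDirected

section ConstantSections

variable {K L M ι : Type*} {F : K × (ι → L) → M}

/-- The parameters `b` for which the section `F (b, ·)` is constant on the cone of all points whose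
coordinates are at least `d`. -/
def constantSections [Preorder L] (F : K × (ι → L) → M) (d : L) : Set K :=
  {b | ∀ x ∈ Ici (const ι d), ∀ y ∈ Ici (const ι d), F (b, x) = F (b, y)}

lemma monotone_constantSections [Preorder L] : Monotone (constantSections F) :=
  fun _ _ hle _ hb x hx y hy =>
    have hsub := Ici_subset_Ici.2 (const_mono hle)
    hb x (hsub hx) y (hsub hy)

lemma isClosed_constantSections [Preorder L] [TopologicalSpace K] [TopologicalSpace L]
    [TopologicalSpace M] [T2Space M] (hF : Continuous F) (d : L) :
    IsClosed (constantSections F d) := by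
  simp only [constantSections, ofPred_forall]
  exact isClosed_biInter fun x _ => isClosed_biInter fun y _ =>
    isClosed_eq (by fun_prop) (by fun_prop)

variable [ConditionallyCompleteLinearOrder L] [Nonempty L] [TopologicalSpace L] [OrderTopology L]
  [CountableInterFilter (atTop : Filter L)] [Countable ι] [TopologicalSpace K] [CompactSpace K]
  [LinearOrder M] [TopologicalSpace M]

lemma eventually_forall_lt_of_le [OrderClosedTopology M] (hF : Continuous F) {p q : M}
    (hpq : p < q) :
    ∀ᶠ d in atTop, ∀ b, ∀ x ∈ Ici (const ι d), ∀ y ∈ Ici (const ι d),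
      F (b, x) ≤ p → F (b, y) < q := by
  -- A pair of points of `ι → L` is treated as one point of `ι ⊕ ι → L`, so that a diagonal point in
  -- the projection of `crossing` is a pair of equal points.
  let crossing : Set (K × (ι ⊕ ι → L)) :=
    {w | F (w.1, w.2 ∘ Sum.inl) ≤ p ∧ q ≤ F (w.1, w.2 ∘ Sum.inr)}
  have hclosed : IsClosed (Prod.snd '' crossing) :=
    isClosedMap_snd_of_compactSpace _ <|
      (isClosed_le (by fun_prop) continuous_const).inter
        (isClosed_le continuous_const (by fun_prop))
  by_contra hcross
  have hcof : ∀ d, ∃ w ∈ Prod.snd '' crossing, const (ι ⊕ ι) d ≤ w := by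
    intro d
    obtain ⟨e, hde, he⟩ := frequently_atTop.1 (not_eventually.1 hcross) d
    push Not at he
    obtain ⟨b, x, hx, y, hy, hp, hq⟩ := he
    exact ⟨Sum.elim x y, ⟨(b, Sum.elim x y), ⟨hp, hq⟩, rfl⟩,
      Sum.rec (fun i => hde.trans (hx i)) fun i => hde.trans (hy i)⟩
  obtain ⟨z, ⟨b, w⟩, ⟨hp, hq⟩, rfl : w = const (ι ⊕ ι) z⟩ :=
    exists_const_mem_of_isClosed hclosed hcof
  exact (hq.trans hp).not_gt hpq

variable [OrderTopology M] [DenselyOrdered M] [∀ u : M, SeparableSpace (Iic u)]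

lemma eventually_mem_constantSections_of_lt (hF : Continuous F) (u : M) :
    ∀ᶠ d in atTop, ∀ b, ∀ x ∈ Ici (const ι d), F (b, x) < u → b ∈ constantSections F d := by
  obtain ⟨S, hSc, hSd⟩ := exists_countable_dense (Iic u)
  have hgap : ∀ᶠ d in atTop, ∀ p ∈ S, ∀ q ∈ S, p < q →
      ∀ b, ∀ x ∈ Ici (const ι d), ∀ y ∈ Ici (const ι d), F (b, x) ≤ p → F (b, y) < q := by
    simp only [eventually_countable_ball hSc]
    intro p _ q _
    by_cases hpq : p < q
    · exact (eventually_forall_lt_of_le hF hpq).mono fun d hd _ => hd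
    · exact Eventually.of_forall fun d h => absurd h hpq
  filter_upwards [hgap] with d hd b
  have hle : ∀ x ∈ Ici (const ι d), ∀ y ∈ Ici (const ι d), F (b, x) < u →
      F (b, y) ≤ F (b, x) := by
    intro x hx y hy hu
    by_contra! hlt
    let lo : Iic u := ⟨F (b, x), hu.le⟩
    let hi : Iic u := ⟨min u (F (b, y)), min_le_left _ _⟩
    obtain ⟨q, hqS, hloq, hqhi⟩ := hSd.exists_between (show lo < hi from lt_min hu hlt)
    obtain ⟨p, hpS, hlop, hpq⟩ := hSd.exists_between hloq
    exact (hd p hpS q hqS hpq b x hx y hy hlop.le).not_ge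
      (le_trans (show (q : M) ≤ hi from hqhi.le) (min_le_right _ _))
  intro x₀ hx₀ hu x hx y hy
  have hlt : ∀ x ∈ Ici (const ι d), F (b, x) < u := fun x hx => (hle x₀ hx₀ x hx hu).trans_lt hu
  exact le_antisymm (hle y hy x hx (hlt y hy)) (hle x hx y hy (hlt x hx))

variable [NoMaxOrder M]

lemma isOpen_iUnion_constantSections (hF : Continuous F) : IsOpen (⋃ d, constantSections F d) := by
  refine isOpen_iff_mem_nhds.2 fun b hb => ?_
  obtain ⟨d₀, hd₀⟩ := mem_iUnion.1 hb
  obtain ⟨u, hu⟩ := exists_gt (F (b, const ι d₀))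
  obtain ⟨d, hd, hdd₀⟩ :=
    ((eventually_mem_constantSections_of_lt hF u).and (eventually_ge_atTop d₀)).exists
  have hlt : F (b, const ι d) < u :=
    (hd₀ _ (const_mono hdd₀) _ self_mem_Ici).trans_lt hu
  have hnhds : ∀ᶠ b' in 𝓝 b, F (b', const ι d) < u :=
    (Continuous.tendsto (by fun_prop) b).eventually_lt_const hlt
  filter_upwards [hnhds] with b' hb'
  exact mem_iUnion.2 ⟨d, hd b' _ self_mem_Ici hb'⟩

lemma exists_mem_constantSections_of_bddAbove (hF : Continuous F) {b : K}
    (hb : BddAbove (range fun z => F (b, const ι z))) : ∃ d, b ∈ constantSections F d := by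
  obtain ⟨e, he⟩ := hb
  obtain ⟨u, hu⟩ := exists_gt e
  obtain ⟨d, hd⟩ := (eventually_mem_constantSections_of_lt hF u).exists
  exact ⟨d, hd b _ self_mem_Ici ((he (mem_range_self d)).trans_lt hu)⟩

theorem exists_constantSections_eq_univ [PreconnectedSpace K] [SeparableSpace K]
    (hF : Continuous F) {b : K} (hb : BddAbove (range fun z => F (b, const ι z))) :
    ∃ d, constantSections F d = univ := by
  have hopen := isOpen_iUnion_constantSections hF
  obtain ⟨d, hd⟩ := exists_eq_iUnion_of_monotone_isClosed monotone_constantSections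
    (isClosed_constantSections hF) hopen
  have hclopen : IsClopen (constantSections F d) :=
    ⟨isClosed_constantSections hF d, hd ▸ hopen⟩
  exact ⟨d, hclopen.eq_univ (hd ▸ nonempty_def.2 ⟨b,
    mem_iUnion.2 (exists_mem_constantSections_of_bddAbove hF hb)⟩)⟩

end ConstantSections

section LinearOrder

variable {α : Type*} [LinearOrder α]

open scoped Classical in
/-- A linear order with a least element in which every nonempty set has a greatest lower bound, as a
conditionally complete linear order. The infimum of the empty set and the supremum of an unbounded
set are `⊥`. -/
abbrev conditionallyCompleteLinearOrderBotOfExistsIsGLB [OrderBot α]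
    (h : ∀ s : Set α, s.Nonempty → ∃ a, IsGLB s a) : ConditionallyCompleteLinearOrderBot α :=
  let inf : Set α → α := fun s => if hs : s.Nonempty then (h s hs).choose else ⊥
  have isGLB_inf (s : Set α) (hs : s.Nonempty) : IsGLB s (inf s) := by
    simp only [inf, dif_pos hs]
    exact (h s hs).choose_spec
  have inf_upperBounds_empty : inf (upperBounds ∅) = ⊥ := by
    rw [upperBounds_empty]
    exact (isGLB_inf univ univ_nonempty).unique isGLB_univ
  { (inferInstance : LinearOrder α), (inferInstance : OrderBot α) with
    __ := LinearOrder.toLattice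
    sInf := inf
    sSup := fun s => inf (upperBounds s)
    isLUB_csSup := fun s _ hs => isGLB_upperBounds.1 (isGLB_inf _ hs)
    isGLB_csInf := fun s hs _ => isGLB_inf s hs
    csSup_empty := inf_upperBounds_empty
    csSup_of_not_bddAbove := fun s hs => (dif_neg hs).trans inf_upperBounds_empty.symm
    csInf_of_not_bddBelow := fun s hs => absurd (OrderBot.bddBelow s) hs }

lemma separableSpace_Iic_of_exists_between [TopologicalSpace α] [OrderTopology α] {u : α}
    {S : Set α} (hS : S.Countable)
    (hbetween : ∀ a b, a < b → b ≤ u → ∃ s ∈ S, a < s ∧ s < b) : SeparableSpace (Iic u) := by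
  cases subsingleton_or_nontrivial (Iic u)
  · infer_instance
  · refine ⟨Subtype.val ⁻¹' S, hS.preimage Subtype.val_injective,
      dense_of_exists_between fun {a b} hab => ?_⟩
    obtain ⟨s, hsS, has, hsb⟩ := hbetween a b hab b.2
    exact ⟨⟨s, hsb.le.trans b.2⟩, hsS, has, hsb⟩

end LinearOrder

section LexOrder

variable {α β : Type*} [LinearOrder α]

lemma exists_isGLB_lex [WellFoundedLT α] [ConditionallyCompleteLinearOrder β] [OrderBot β]
    {s : Set (α ×ₗ β)} (hs : s.Nonempty) : ∃ x, IsGLB s x := by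
  obtain ⟨_, ⟨w, hw, rfl⟩, hmin⟩ :=
    WellFounded.has_min wellFounded_lt ((fun x => (ofLex x).1) '' s) (hs.image _)
  let fiber : Set β := {b | toLex ((ofLex w).1, b) ∈ s}
  have hglb : IsGLB fiber (sInf fiber) := isGLB_csInf ⟨(ofLex w).2, hw⟩ (OrderBot.bddBelow _)
  refine ⟨toLex ((ofLex w).1, sInf fiber), fun x hx => Prod.Lex.le_iff'.2 ⟨?_, fun h => ?_⟩,
    fun y hy => Prod.Lex.le_iff'.2 ⟨?_, fun h => ?_⟩⟩
  · exact not_lt.1 (hmin _ (mem_image_of_mem _ hx))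
  · have h : (ofLex w).1 = (ofLex x).1 := h
    exact hglb.1 (by rwa [mem_ofPred_eq, h])
  · have hyw : (ofLex y).1 ≤ (ofLex w).1 := Prod.Lex.monotone_fst_ofLex (hy hw)
    exact hyw
  · exact hglb.2 fun b hb => (Prod.Lex.le_iff'.1 (hy hb)).2 h

lemma exists_countable_between_lex [LinearOrder β] [DenselyOrdered β] [NoMaxOrder β]
    [TopologicalSpace β] [OrderTopology β] [SeparableSpace β] {u : α ×ₗ β}
    (hu : (Iic (ofLex u).1).Countable) :
    ∃ S : Set (α ×ₗ β), S.Countable ∧ ∀ a b, a < b → b ≤ u → ∃ s ∈ S, a < s ∧ s < b := by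
  obtain ⟨T, hTc, hTd⟩ := exists_countable_dense β
  refine ⟨toLex '' (Iic (ofLex u).1 ×ˢ T), (hu.prod hTc).image _, fun a b hab hbu => ?_⟩
  have hau : (ofLex a).1 ≤ (ofLex u).1 := Prod.Lex.monotone_fst_ofLex (hab.le.trans hbu)
  rcases Prod.Lex.lt_iff.1 hab with hfst | ⟨hfst, hsnd⟩
  · obtain ⟨c, hc⟩ := exists_gt (ofLex a).2
    obtain ⟨t, htT, hat, -⟩ := hTd.exists_between hc
    exact ⟨toLex ((ofLex a).1, t), mem_image_of_mem _ ⟨hau, htT⟩,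
      Prod.Lex.lt_iff.2 (.inr ⟨rfl, hat⟩), Prod.Lex.lt_iff.2 (.inl hfst)⟩
  · obtain ⟨t, htT, hat, htb⟩ := hTd.exists_between hsnd
    exact ⟨toLex ((ofLex a).1, t), mem_image_of_mem _ ⟨hau, htT⟩,
      Prod.Lex.lt_iff.2 (.inr ⟨rfl, hat⟩), Prod.Lex.lt_iff.2 (.inr ⟨hfst, htb⟩)⟩

end LexOrder

lemma countable_Iic_of_lt_omega_one {o : Ordinal} (ho : o < Ordinal.omega 1) :
    (Iic o).Countable := by
  have hsucc : Order.succ o < Ordinal.omega 1 := (Cardinal.isSuccLimit_omega 1).succ_lt ho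
  rw [← Order.Iio_succ, ← Cardinal.le_aleph0_iff_set_countable, Cardinal.mk_Iio_ordinal,
    Cardinal.lift_le_aleph0, ← Cardinal.lt_aleph_one_iff, ← Cardinal.lt_ord]
  simpa using hsucc

namespace LongRay

instance : OrderBot LongRay where
  bot := rayZero
  bot_le x := Prod.Lex.le_iff'.2
    ⟨Subtype.coe_le_coe.1 zero_le, fun _ => (ofLex x).2.2.1⟩

instance : NoMaxOrder LongRay :=
  inferInstanceAs (NoMaxOrder ({o : Ordinal // o < Omega1} ×ₗ Ico (0 : ℝ) 1))

instance : DenselyOrdered LongRay :=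
  inferInstanceAs (DenselyOrdered ({o : Ordinal // o < Omega1} ×ₗ Ico (0 : ℝ) 1))

lemma bddAbove_of_countable {s : Set LongRay} (hs : s.Countable) : BddAbove s := by
  have := hs.to_subtype
  let height (x : s) : Ordinal := (ofLex x.1).1.1
  have hlt : ⨆ x, Order.succ (height x) < Omega1 := Ordinal.iSup_lt_omega_one fun x =>
    (Cardinal.isSuccLimit_omega 1).succ_lt (ofLex x.1).1.2
  refine ⟨toLex (⟨_, hlt⟩, ⟨0, by simp⟩), fun x hx => Prod.Lex.le_iff.2 (.inl ?_)⟩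
  calc height ⟨x, hx⟩ < Order.succ (height ⟨x, hx⟩) := Order.lt_succ _
    _ ≤ ⨆ x, Order.succ (height x) := Ordinal.le_iSup (fun x => Order.succ (height x)) _

instance : CountableInterFilter (atTop : Filter LongRay) :=
  countableInterFilter_atTop_of_bddAbove fun _ => bddAbove_of_countable

/-- The long ray as a conditionally complete linear order. This is not an instance, so that the
order of `LongRay` is always found through its `LinearOrder` instance. -/
abbrev conditionallyCompleteLinearOrderBot : ConditionallyCompleteLinearOrderBot LongRay :=
  conditionallyCompleteLinearOrderBotOfExistsIsGLB fun _ hs =>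
    have : Inhabited (Ico (0 : ℝ) 1) := ⟨⊥⟩
    exists_isGLB_lex (α := {o : Ordinal // o < Omega1}) (β := Ico (0 : ℝ) 1) hs

instance (u : LongRay) : SeparableSpace (Iic u) :=
  have hcountable : (Iic (ofLex u).1).Countable :=
    (countable_Iic_of_lt_omega_one (ofLex u).1.2).preimage_of_injOn Subtype.val_injective.injOn
  let ⟨_, hS, hbetween⟩ :=
    exists_countable_between_lex (α := {o : Ordinal // o < Omega1}) (β := Ico (0 : ℝ) 1) hcountable
  separableSpace_Iic_of_exists_between hS hbetween

instance (c : LongRay) : CompactSpace (Iic c) :=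
  let _ := conditionallyCompleteLinearOrderBot
  isCompact_iff_compactSpace.1 (Icc_bot (a := c) ▸ isCompact_Icc)

instance (c : LongRay) : PreconnectedSpace (Iic c) :=
  let _ := conditionallyCompleteLinearOrderBot
  Subtype.preconnectedSpace isPreconnected_Iic

end LongRay

/-- if `f` is `I`-bounded then for every `c` there is `d` such that for
every `b ∈ [0,c]^{N∖I}`, `f` is constant on `E_I(b,d)`. -/
theorem bounded_direction_constant (n : ℕ) (f : (Fin n → LongRay) → LongRay)
    (hf : Continuous f) (I : Finset (Fin n)) (hI : I.Nonempty)
    (hbd : ¬ ICofinal n f I) :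
    ∀ c : LongRay, ∃ d : LongRay, ∀ b : Fin n → LongRay, (∀ j ∉ I, b j ≤ c) →
      ∀ x ∈ ESet n I b d, ∀ y ∈ ESet n I b d, f x = f y := by
  intro c
  let _ := LongRay.conditionallyCompleteLinearOrderBot
  let split := Homeomorph.piEquivPiSubtypeProd (· ∈ I) fun _ => LongRay
  let F : ({j // j ∉ I} → Iic c) × ({i // i ∈ I} → LongRay) → LongRay :=
    fun p => f (split.symm (p.2, fun j => p.1 j))
  have hF : Continuous F := by fun_prop
  have hdiag : BddAbove (range fun z => F (⊥, const _ z)) := by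
    refine (not_not.1 hbd).mono (range_subset_iff.2 fun z => ?_)
    refine mem_image_of_mem f ⟨?_, ?_⟩
    · exact fun i hi i' hi' => Eq.trans (b := z) (dif_pos hi) (.symm (dif_pos hi'))
    · exact fun j hj => dif_neg hj
  obtain ⟨d, hd⟩ := exists_constantSections_eq_univ hF hdiag
  refine ⟨d, fun b hb x hx y hy => ?_⟩
  let b' : {j // j ∉ I} → Iic c := fun j => ⟨b j, hb j j.2⟩
  have hsplit : ∀ x ∈ ESet n I b d, f x = F (b', fun i => x i) := fun x hx =>
    congrArg f (split.eq_symm_apply.2 (Prod.ext rfl (funext fun j => hx.2 j j.2)))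
  rw [hsplit x hx, hsplit y hy]
  exact (hd ▸ mem_univ b' : b' ∈ constantSections F d) _ (fun i => hx.1 i i.2) _
    fun i => hy.1 i i.2
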